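/- Let Q be an n×n real symmetric matrix and f : ℤⁿ → ℝ defined by f(x) = xᵀQx. For x, y ∈ ℤⁿ, the discrete midpoint convexity inequality f(x) + f(y) ≥ f(⌈(x+y)/2⌉) + f(⌊(x+y)/2⌋) holds if and only if zᵀQz ≥ 1_Jᵀ Q 1_J, where z = x − y and J = {i : z_i is odd}. Consequently, f is locally (resp. globally) discrete midpoint convex if and only if zᵀQz ≥ 1_Jᵀ Q 1_J holds for all z ∈ ℤⁿ with ‖z‖∞ = 2 (resp. ‖z‖∞ ≥ 2), where J = {i : z_i is odd}. -/

import Mathlib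

open Matrix Classical

/-- The ℓ∞-norm of an integer vector, as a natural number. -/
def linf {n : ℕ} (z : Fin n → ℤ) : ℕ :=
  Finset.univ.sup fun i => (z i).natAbs

/-- Componentwise round-up of (x+y)/2. -/
def avgUp {n : ℕ} (x y : Fin n → ℤ) : Fin n → ℤ :=
  fun i => ⌈((x i + y i : ℚ)) / 2⌉

/-- Componentwise round-down of (x+y)/2. -/
def avgDown {n : ℕ} (x y : Fin n → ℤ) : Fin n → ℤ :=
  fun i => ⌊((x i + y i : ℚ)) / 2⌋

/-- The real cast of an integer vector. -/
def castVec {n : ℕ} (z : Fin n → ℤ) : Fin n → ℝ := fun i => (z i : ℝ)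

/-- The quadratic function `f(x) = xᵀ Q x` on `ℤⁿ`. -/
def quadFn {n : ℕ} (Q : Matrix (Fin n) (Fin n) ℝ) (x : Fin n → ℤ) : ℝ :=
  castVec x ⬝ᵥ Q.mulVec (castVec x)

/-- The real-valued function `f` satisfies discrete midpoint convexity for the
pair `(x, y)`. -/
def DMCPairR {n : ℕ} (f : (Fin n → ℤ) → ℝ) (x y : Fin n → ℤ) : Prop :=
  f (avgUp x y) + f (avgDown x y) ≤ f x + f y

/-- A real-valued `f` is globally discrete midpoint convex (its effective
domain is all of `ℤⁿ`, which is trivially a discrete midpoint convex set). -/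
def GloballyDMCR {n : ℕ} (f : (Fin n → ℤ) → ℝ) : Prop :=
  ∀ x y : Fin n → ℤ, 2 ≤ linf (x - y) → DMCPairR f x y

/-- A real-valued `f` is locally discrete midpoint convex (its effective
domain is all of `ℤⁿ`, which is trivially a discrete midpoint convex set). -/
def LocallyDMCR {n : ℕ} (f : (Fin n → ℤ) → ℝ) : Prop :=
  ∀ x y : Fin n → ℤ, linf (x - y) = 2 → DMCPairR f x y

/-- The characteristic real vector of the set of indices where `z` is odd. -/
noncomputable def oddChar {n : ℕ} (z : Fin n → ℤ) : Fin n → ℝ :=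
  fun i => if Odd (z i) then 1 else 0

theorem avgDown_apply {n : ℕ} (x y : Fin n → ℤ) (i : Fin n) :
    avgDown x y i = (x i + y i) / 2 := by
  unfold avgDown
  exact_mod_cast Rat.floor_intCast_div_natCast (x i + y i) 2

theorem avgUp_apply {n : ℕ} (x y : Fin n → ℤ) (i : Fin n) :
    avgUp x y i = -(-(x i + y i) / 2) := by
  unfold avgUp
  exact_mod_cast Rat.ceil_intCast_div_natCast (x i + y i) 2

/-- The rounded midpoints of `x` and `y` add up to `x + y`. -/
theorem castVec_avgUp_add_avgDown {n : ℕ} (x y : Fin n → ℤ) :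
    castVec (avgUp x y) + castVec (avgDown x y) = castVec x + castVec y := by
  funext i
  have h : avgUp x y i + avgDown x y i = x i + y i := by
    rw [avgUp_apply, avgDown_apply]
    omega
  simp only [castVec, Pi.add_apply]
  exact_mod_cast h

/-- The rounded midpoints of `x` and `y` differ exactly where `x - y` is odd. -/
theorem castVec_avgUp_sub_avgDown {n : ℕ} (x y : Fin n → ℤ) :
    castVec (avgUp x y) - castVec (avgDown x y) = oddChar (x - y) := by
  funext i
  simp only [castVec, oddChar, Pi.sub_apply]
  split_ifs with hodd
  · have h : avgUp x y i - avgDown x y i = 1 := by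
      rw [Int.odd_iff] at hodd
      rw [avgUp_apply, avgDown_apply]
      omega
    exact_mod_cast h
  · have h : avgUp x y i - avgDown x y i = 0 := by
      rw [Int.odd_iff] at hodd
      rw [avgUp_apply, avgDown_apply]
      omega
    exact_mod_cast h

theorem castVec_sub {n : ℕ} (x y : Fin n → ℤ) :
    castVec (x - y) = castVec x - castVec y := by
  funext i
  simp [castVec]

/-- The parallelogram law for the quadratic form of a matrix. -/
theorem parallelogram_dotProduct_mulVec {n : ℕ} (Q : Matrix (Fin n) (Fin n) ℝ)
    (a b : Fin n → ℝ) :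
    2 * (a ⬝ᵥ Q.mulVec a + b ⬝ᵥ Q.mulVec b) =
      (a + b) ⬝ᵥ Q.mulVec (a + b) + (a - b) ⬝ᵥ Q.mulVec (a - b) := by
  simp only [Matrix.mulVec_add, Matrix.mulVec_sub, add_dotProduct, sub_dotProduct,
    dotProduct_add, dotProduct_sub]
  ring

theorem dmcPairR_quadFn_iff {n : ℕ} (Q : Matrix (Fin n) (Fin n) ℝ) (x y : Fin n → ℤ) :
    DMCPairR (quadFn Q) x y ↔
      oddChar (x - y) ⬝ᵥ Q.mulVec (oddChar (x - y)) ≤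
        castVec (x - y) ⬝ᵥ Q.mulVec (castVec (x - y)) := by
  have hmid := parallelogram_dotProduct_mulVec Q (castVec (avgUp x y)) (castVec (avgDown x y))
  have hxy := parallelogram_dotProduct_mulVec Q (castVec x) (castVec y)
  rw [castVec_avgUp_add_avgDown, castVec_avgUp_sub_avgDown] at hmid
  rw [← castVec_sub] at hxy
  unfold DMCPairR quadFn
  constructor <;> intro h <;> linarith

/-- For a quadratic function `f(x) = xᵀ Q x` with `Q` symmetric: discrete
midpoint convexity for `(x, y)` is equivalent to `zᵀQz ≥ 1_Jᵀ Q 1_J` with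
`z = x − y` and `J = {i : z_i odd}`; consequently `f` is locally (resp.
globally) discrete midpoint convex iff this inequality holds for all `z` with
`‖z‖∞ = 2` (resp. `‖z‖∞ ≥ 2`). -/
theorem quad_dmc_characterization {n : ℕ} (Q : Matrix (Fin n) (Fin n) ℝ)
    (hQ : Q.IsSymm) :
    (∀ x y : Fin n → ℤ, DMCPairR (quadFn Q) x y ↔
      oddChar (x - y) ⬝ᵥ Q.mulVec (oddChar (x - y)) ≤
        castVec (x - y) ⬝ᵥ Q.mulVec (castVec (x - y))) ∧
    (LocallyDMCR (quadFn Q) ↔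
      ∀ z : Fin n → ℤ, linf z = 2 →
        oddChar z ⬝ᵥ Q.mulVec (oddChar z) ≤ castVec z ⬝ᵥ Q.mulVec (castVec z)) ∧
    (GloballyDMCR (quadFn Q) ↔
      ∀ z : Fin n → ℤ, 2 ≤ linf z →
        oddChar z ⬝ᵥ Q.mulVec (oddChar z) ≤ castVec z ⬝ᵥ Q.mulVec (castVec z)) := by
  have sub_zero_pair (z : Fin n → ℤ) := dmcPairR_quadFn_iff Q z 0
  simp only [sub_zero] at sub_zero_pair
  refine ⟨dmcPairR_quadFn_iff Q, ⟨fun h z hz => ?_, fun h x y hxy => ?_⟩,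
    ⟨fun h z hz => ?_, fun h x y hxy => ?_⟩⟩
  · exact (sub_zero_pair z).1 (h z 0 (by rwa [sub_zero]))
  · exact (dmcPairR_quadFn_iff Q x y).2 (h _ hxy)
  · exact (sub_zero_pair z).1 (h z 0 (by rwa [sub_zero]))
  · exact (dmcPairR_quadFn_iff Q x y).2 (h _ hxy)
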